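/- arXiv:2512.08364 — 2 statements merged into one kernel-verified Lean document; each statement's English description precedes it below -/
import Mathlib

section
/- Let d, N ∈ ℕ and let ρ_d be a probability density on [0,1]^d (measurable, nonnegative, ∫_{[0,1]^d} ρ_d = 1, ρ_d > 0 almost everywhere) such that C := ∫_{[0,1]^d} (∏_{j=1}^d (1−t_j))/ρ_d(t) dt < ∞. Then there exist deterministic points t_1,…,t_N ∈ [0,1]^d with ρ_d(t_k) > 0 for all k such that, with weights a_k = 1/(N ρ_d(t_k)), one has ∫_{[0,1]^d} Δ(x)² dx ≤ (C − 3^{−d})/N. -/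
open MeasureTheory

/-!
This is Maurey's empirical method in `L²([0,1]^d)`. Under the probability measure `ρ dt`, the
random vector `X t = 1_{[0,·)}(t) / ρ t` has mean `x ↦ ∏ x_j` and second moment `C`. Replacing a
partial sum `s` by `s + (X t - 𝔼 X)` increases `‖s‖²` on average by `𝔼 ‖X‖² - ‖𝔼 X‖² = C - 3^{-d}`,
so some `t` increases it by no more than that; choosing `N` points greedily and dividing by `N²`
gives the bound.
-/

open scoped RealInnerProductSpace

section WeakIntegral

variable {Ω H : Type*} [MeasurableSpace Ω] [NormedAddCommGroup H] [InnerProductSpace ℝ H]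
  {μ : Measure Ω} {X : Ω → H} {m : H}

lemma norm_add_sub_sq_real (s x m : H) :
    ‖s + (x - m)‖ ^ 2 = ‖x‖ ^ 2 + 2 * ⟪x, s - m⟫ + ‖s - m‖ ^ 2 := by
  rw [← norm_add_sq_real, add_sub_left_comm]

/-- `m` is the weak (Pettis) integral of `X`: the inner products with each `y : H` integrate to
`⟪m, y⟫`. Unlike for the Bochner integral, strong measurability of `X` need not be checked. -/
def HasWeakIntegral (X : Ω → H) (m : H) (μ : Measure Ω) : Prop :=
  ∀ y : H, Integrable (fun ω => ⟪X ω, y⟫) μ ∧ ∫ ω, ⟪X ω, y⟫ ∂μ = ⟪m, y⟫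

namespace HasWeakIntegral

lemma integrable_norm_add_sub_sq [IsFiniteMeasure μ] (hX : HasWeakIntegral X m μ)
    (hXsq : Integrable (fun ω => ‖X ω‖ ^ 2) μ) (s : H) :
    Integrable (fun ω => ‖s + (X ω - m)‖ ^ 2) μ := by
  simp only [norm_add_sub_sq_real]
  exact (hXsq.add ((hX _).1.const_mul 2)).add (integrable_const _)

lemma integral_norm_add_sub_sq [IsProbabilityMeasure μ] (hX : HasWeakIntegral X m μ)
    (hXsq : Integrable (fun ω => ‖X ω‖ ^ 2) μ) (s : H) :
    ∫ ω, ‖s + (X ω - m)‖ ^ 2 ∂μ = ‖s‖ ^ 2 + (∫ ω, ‖X ω‖ ^ 2 ∂μ - ‖m‖ ^ 2) := by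
  obtain ⟨hinner, hinner_eq⟩ := hX (s - m)
  have norm_sq : ‖s‖ ^ 2 = ‖m‖ ^ 2 + 2 * ⟪m, s - m⟫ + ‖s - m‖ ^ 2 := by
    simpa using norm_add_sub_sq_real s m m
  calc ∫ ω, ‖s + (X ω - m)‖ ^ 2 ∂μ
      = ∫ ω, (‖X ω‖ ^ 2 + 2 * ⟪X ω, s - m⟫ + ‖s - m‖ ^ 2) ∂μ := by
        simp only [norm_add_sub_sq_real]
    _ = ∫ ω, ‖X ω‖ ^ 2 ∂μ + 2 * ⟪m, s - m⟫ + ‖s - m‖ ^ 2 := by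
        rw [integral_add (by exact hXsq.add (hinner.const_mul 2)) (integrable_const _),
          integral_add hXsq (hinner.const_mul 2), integral_const_mul, hinner_eq, integral_const,
          probReal_univ, one_smul]
    _ = ‖s‖ ^ 2 + (∫ ω, ‖X ω‖ ^ 2 ∂μ - ‖m‖ ^ 2) := by
        rw [norm_sq]
        ring

lemma exists_norm_add_sub_sq_le [IsProbabilityMeasure μ] (hX : HasWeakIntegral X m μ)
    (hXsq : Integrable (fun ω => ‖X ω‖ ^ 2) μ) {A : Set Ω} (hA : ∀ᵐ ω ∂μ, ω ∈ A) (s : H) :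
    ∃ ω ∈ A, ‖s + (X ω - m)‖ ^ 2 ≤ ‖s‖ ^ 2 + (∫ ω, ‖X ω‖ ^ 2 ∂μ - ‖m‖ ^ 2) := by
  obtain ⟨ω, hω, hle⟩ :=
    exists_notMem_null_le_integral (hX.integrable_norm_add_sub_sq hXsq s) (mem_ae_iff.1 hA)
  exact ⟨ω, Set.notMem_compl_iff.1 hω, hle.trans_eq (hX.integral_norm_add_sub_sq hXsq s)⟩

lemma exists_norm_sum_sub_sq_le [IsProbabilityMeasure μ] (hX : HasWeakIntegral X m μ)
    (hXsq : Integrable (fun ω => ‖X ω‖ ^ 2) μ) {A : Set Ω} (hA : ∀ᵐ ω ∂μ, ω ∈ A) (n : ℕ) :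
    ∃ ω : Fin n → Ω, (∀ k, ω k ∈ A) ∧
      ‖∑ k, (X (ω k) - m)‖ ^ 2 ≤ n * (∫ ω, ‖X ω‖ ^ 2 ∂μ - ‖m‖ ^ 2) := by
  induction n with
  | zero => exact ⟨Fin.elim0, fun k => k.elim0, by simp⟩
  | succ n ih =>
    obtain ⟨ω, hωA, hω⟩ := ih
    obtain ⟨ω', hω'A, hω'⟩ :=
      hX.exists_norm_add_sub_sq_le hXsq hA (∑ k, (X (ω k) - m))
    refine ⟨Fin.snoc ω ω', Fin.lastCases (by simpa using hω'A) (by simpa using hωA), ?_⟩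
    simp only [Fin.sum_univ_castSucc, Fin.snoc_castSucc, Fin.snoc_last]
    push_cast
    linarith

theorem exists_norm_average_sub_sq_le [IsProbabilityMeasure μ] (hX : HasWeakIntegral X m μ)
    (hXsq : Integrable (fun ω => ‖X ω‖ ^ 2) μ) {A : Set Ω} (hA : ∀ᵐ ω ∂μ, ω ∈ A)
    {N : ℕ} (hN : 0 < N) :
    ∃ ω : Fin N → Ω, (∀ k, ω k ∈ A) ∧
      ‖(N : ℝ)⁻¹ • ∑ k, X (ω k) - m‖ ^ 2 ≤ (∫ ω, ‖X ω‖ ^ 2 ∂μ - ‖m‖ ^ 2) / N := by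
  obtain ⟨ω, hωA, hω⟩ := hX.exists_norm_sum_sub_sq_le hXsq hA N
  have hN' : (0 : ℝ) < N := Nat.cast_pos.2 hN
  have average_sub : (N : ℝ)⁻¹ • ∑ k, X (ω k) - m = (N : ℝ)⁻¹ • ∑ k, (X (ω k) - m) := by
    rw [Finset.sum_sub_distrib, smul_sub, Finset.sum_const, Finset.card_fin,
      ← Nat.cast_smul_eq_nsmul ℝ, inv_smul_smul₀ hN'.ne']
  refine ⟨ω, hωA, ?_⟩
  calc ‖(N : ℝ)⁻¹ • ∑ k, X (ω k) - m‖ ^ 2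
      = (N : ℝ)⁻¹ ^ 2 * ‖∑ k, (X (ω k) - m)‖ ^ 2 := by
        rw [average_sub, norm_smul, mul_pow, Real.norm_of_nonneg (inv_nonneg.2 hN'.le)]
    _ ≤ (N : ℝ)⁻¹ ^ 2 * (N * (∫ ω, ‖X ω‖ ^ 2 ∂μ - ‖m‖ ^ 2)) := by gcongr
    _ = (∫ ω, ‖X ω‖ ^ 2 ∂μ - ‖m‖ ^ 2) / N := by field_simp

end HasWeakIntegral

end WeakIntegral

section ImportanceSampling

variable {Ω : Type*} [MeasurableSpace Ω] {μ : Measure Ω} {ρ : Ω → ℝ}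

lemma isProbabilityMeasure_withDensity_ofReal (hρ : ∀ᵐ ω ∂μ, 0 ≤ ρ ω) (hprob : ∫ ω, ρ ω ∂μ = 1) :
    IsProbabilityMeasure (μ.withDensity fun ω => ENNReal.ofReal (ρ ω)) := by
  have hint : Integrable ρ μ := .of_integral_ne_zero (hprob ▸ one_ne_zero)
  constructor
  rw [withDensity_apply _ .univ, setLIntegral_univ,
    ← ofReal_integral_eq_lintegral_ofReal hint hρ, hprob, ENNReal.ofReal_one]

section Smul

variable {E : Type*} [NormedAddCommGroup E] [NormedSpace ℝ E]

lemma toReal_ofReal_smul_inv_smul_ae_eq (hpos : ∀ᵐ ω ∂μ, 0 < ρ ω) (g : Ω → E) :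
    (fun ω => (ENNReal.ofReal (ρ ω)).toReal • (ρ ω)⁻¹ • g ω) =ᵐ[μ] g := by
  filter_upwards [hpos] with ω hω
  rw [ENNReal.toReal_ofReal hω.le, smul_inv_smul₀ hω.ne']

lemma integrable_inv_smul_withDensity_iff (hρ : AEMeasurable ρ μ) (hpos : ∀ᵐ ω ∂μ, 0 < ρ ω)
    {g : Ω → E} :
    Integrable (fun ω => (ρ ω)⁻¹ • g ω) (μ.withDensity fun ω => ENNReal.ofReal (ρ ω)) ↔
      Integrable g μ := by
  rw [integrable_withDensity_iff_integrable_smul₀' hρ.ennreal_ofReal (by simp)]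
  exact integrable_congr (toReal_ofReal_smul_inv_smul_ae_eq hpos g)

lemma integral_inv_smul_withDensity (hρ : AEMeasurable ρ μ) (hpos : ∀ᵐ ω ∂μ, 0 < ρ ω)
    (g : Ω → E) :
    ∫ ω, (ρ ω)⁻¹ • g ω ∂(μ.withDensity fun ω => ENNReal.ofReal (ρ ω)) = ∫ ω, g ω ∂μ := by
  rw [integral_withDensity_eq_integral_toReal_smul₀ hρ.ennreal_ofReal (by simp)]
  exact integral_congr_ae (toReal_ofReal_smul_inv_smul_ae_eq hpos g)

end Smul

variable {H : Type*} [NormedAddCommGroup H] [InnerProductSpace ℝ H] {φ : Ω → H} {m : H}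

lemma HasWeakIntegral.inv_smul_withDensity (hφ : HasWeakIntegral φ m μ) (hρ : AEMeasurable ρ μ)
    (hpos : ∀ᵐ ω ∂μ, 0 < ρ ω) :
    HasWeakIntegral (fun ω => (ρ ω)⁻¹ • φ ω) m
      (μ.withDensity fun ω => ENNReal.ofReal (ρ ω)) := by
  intro y
  simp only [real_inner_smul_left, ← smul_eq_mul (ρ _)⁻¹]
  rw [integrable_inv_smul_withDensity_iff hρ hpos, integral_inv_smul_withDensity hρ hpos]
  exact hφ y

theorem HasWeakIntegral.exists_norm_importance_average_sub_sq_le (hφ : HasWeakIntegral φ m μ)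
    (hprob : ∫ ω, ρ ω ∂μ = 1) (hpos : ∀ᵐ ω ∂μ, 0 < ρ ω)
    (hint : Integrable (fun ω => ‖φ ω‖ ^ 2 / ρ ω) μ) {A : Set Ω} (hA : ∀ᵐ ω ∂μ, ω ∈ A)
    {N : ℕ} (hN : 0 < N) :
    ∃ ω : Fin N → Ω, (∀ k, ω k ∈ A) ∧ (∀ k, 0 < ρ (ω k)) ∧
      ‖(N : ℝ)⁻¹ • ∑ k, (ρ (ω k))⁻¹ • φ (ω k) - m‖ ^ 2 ≤
        (∫ ω, ‖φ ω‖ ^ 2 / ρ ω ∂μ - ‖m‖ ^ 2) / N := by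
  have hρ : AEMeasurable ρ μ :=
    (Integrable.of_integral_ne_zero (hprob ▸ one_ne_zero)).aemeasurable
  have : IsProbabilityMeasure (μ.withDensity fun ω => ENNReal.ofReal (ρ ω)) :=
    isProbabilityMeasure_withDensity_ofReal (hpos.mono fun _ => le_of_lt) hprob
  have norm_sq (ω : Ω) : ‖(ρ ω)⁻¹ • φ ω‖ ^ 2 = (ρ ω)⁻¹ • (‖φ ω‖ ^ 2 / ρ ω) := by
    rw [norm_smul, mul_pow, Real.norm_eq_abs, sq_abs, smul_eq_mul]
    ring
  have hsq : Integrable (fun ω => ‖(ρ ω)⁻¹ • φ ω‖ ^ 2)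
      (μ.withDensity fun ω => ENNReal.ofReal (ρ ω)) := by
    simpa only [norm_sq] using (integrable_inv_smul_withDensity_iff hρ hpos).2 hint
  obtain ⟨ω, hω, hle⟩ := (hφ.inv_smul_withDensity hρ hpos).exists_norm_average_sub_sq_le hsq
    (A := {ω | ω ∈ A ∧ 0 < ρ ω}) ((withDensity_absolutelyContinuous μ _).ae_le (hA.and hpos)) hN
  simp only [norm_sq, integral_inv_smul_withDensity hρ hpos] at hle
  exact ⟨ω, fun k => (hω k).1, fun k => (hω k).2, hle⟩

end ImportanceSampling

section SetSystem

variable {Ω α : Type*} [MeasurableSpace Ω] [MeasurableSpace α] {S : Set (Ω × α)}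

/-- The indicator function of the section `S_ω = {x | (ω, x) ∈ S}` as a vector of `L²(ν)`. -/
noncomputable def sectionLp (ν : Measure α) [IsFiniteMeasure ν] (hS : MeasurableSet S) (ω : Ω) :
    Lp ℝ 2 ν :=
  indicatorConstLp 2 (measurable_prodMk_left (x := ω) hS) (measure_ne_top ν _) 1

lemma norm_sectionLp_sq (ν : Measure α) [IsFiniteMeasure ν] (hS : MeasurableSet S) (ω : Ω) :
    ‖sectionLp ν hS ω‖ ^ 2 = ν.real (Prod.mk ω ⁻¹' S) := by
  rw [← real_inner_self_eq_norm_sq, sectionLp,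
    L2.real_inner_indicatorConstLp_one_indicatorConstLp_one, Set.inter_self]

lemma norm_Lp_two_sq_eq_integral_sq {ν : Measure α} (f : Lp ℝ 2 ν) :
    ‖f‖ ^ 2 = ∫ x, f x ^ 2 ∂ν := by
  rw [← real_inner_self_eq_norm_sq f, L2.inner_def]
  simp

variable (μ : Measure Ω) [IsFiniteMeasure μ] (ν : Measure α) [IsFiniteMeasure ν]

lemma memLp_measureReal_prodMk_right (hS : MeasurableSet S) (p : ENNReal) :
    MemLp (fun x => μ.real ((·, x) ⁻¹' S)) p ν := by
  refine .of_bound (measurable_measure_prodMk_right hS).ennreal_toReal.aestronglyMeasurable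
    (μ.real Set.univ) (.of_forall fun x => ?_)
  rw [Real.norm_of_nonneg measureReal_nonneg]
  exact measureReal_mono (Set.subset_univ _)

/-- The function `x ↦ μ {ω | (ω, x) ∈ S}` as a vector of `L²(ν)`; it is the weak mean of the
sections `sectionLp ν hS ω`. -/
noncomputable def fiberMassLp (hS : MeasurableSet S) : Lp ℝ 2 ν :=
  (memLp_measureReal_prodMk_right μ ν hS 2).toLp _

lemma norm_fiberMassLp_sq (hS : MeasurableSet S) :
    ‖fiberMassLp μ ν hS‖ ^ 2 = ∫ x, μ.real ((·, x) ⁻¹' S) ^ 2 ∂ν := by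
  rw [norm_Lp_two_sq_eq_integral_sq]
  refine integral_congr_ae ?_
  filter_upwards [(memLp_measureReal_prodMk_right μ ν hS 2).coeFn_toLp] with x hx
  rw [fiberMassLp, hx]

lemma hasWeakIntegral_sectionLp (hS : MeasurableSet S) :
    HasWeakIntegral (sectionLp ν hS) (fiberMassLp μ ν hS) μ := by
  intro y
  have inner_section (ω : Ω) :
      ⟪sectionLp ν hS ω, y⟫ = ∫ x, S.indicator (fun p => y p.2) (ω, x) ∂ν := by
    rw [sectionLp, L2.inner_indicatorConstLp_one,
      ← integral_indicator (measurable_prodMk_left hS)]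
    rfl
  have hint : Integrable (S.indicator fun p : Ω × α => y p.2) (μ.prod ν) :=
    (((Lp.memLp y).integrable one_le_two).comp_snd μ).indicator hS
  have inner_fiber (x : α) :
      ∫ ω, S.indicator (fun p => y p.2) (ω, x) ∂μ = μ.real ((·, x) ⁻¹' S) * y x :=
    integral_indicator_const (y x) (measurable_prodMk_right hS)
  have inner_mean :
      ⟪fiberMassLp μ ν hS, y⟫ = ∫ x, μ.real ((·, x) ⁻¹' S) * y x ∂ν := by
    rw [L2.inner_def]
    refine integral_congr_ae ?_
    filter_upwards [(memLp_measureReal_prodMk_right μ ν hS 2).coeFn_toLp] with x hx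
    rw [fiberMassLp, hx, real_inner_comm]
    rfl
  simp only [inner_section]
  refine ⟨hint.integral_prod_left, ?_⟩
  rw [← integral_prod _ hint, integral_prod_symm _ hint, inner_mean]
  simp only [inner_fiber]

lemma norm_sum_smul_sectionLp_sub_sq (hS : MeasurableSet S) {ι : Type*} [Fintype ι] (a : ι → ℝ)
    (t : ι → Ω) :
    ‖∑ k, a k • sectionLp ν hS (t k) - fiberMassLp μ ν hS‖ ^ 2 =
      ∫ x, ((∑ k, a k * S.indicator 1 (t k, x)) - μ.real ((·, x) ⁻¹' S)) ^ 2 ∂ν := by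
  rw [norm_Lp_two_sq_eq_integral_sq]
  refine integral_congr_ae ?_
  have hsmul : ∀ᵐ x ∂ν, ∀ k, (a k • sectionLp ν hS (t k)) x = a k * S.indicator 1 (t k, x) := by
    refine ae_all_iff.2 fun k => ?_
    filter_upwards [Lp.coeFn_smul (a k) (sectionLp ν hS (t k)),
      indicatorConstLp_coeFn (p := 2) (c := (1 : ℝ)) (hs := measurable_prodMk_left (x := t k) hS)
        (hμs := measure_ne_top ν _)] with x hsmul hind
    rw [hsmul, Pi.smul_apply, sectionLp, hind]
    rfl
  filter_upwards [hsmul, Lp.coeFn_sub (∑ k, a k • sectionLp ν hS (t k)) (fiberMassLp μ ν hS),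
    Lp.coeFn_finsetSum Finset.univ fun k => a k • sectionLp ν hS (t k),
    (memLp_measureReal_prodMk_right μ ν hS 2).coeFn_toLp] with x hsmul hsub hsum hmean
  rw [hsub, Pi.sub_apply, hsum, Finset.sum_apply, fiberMassLp, hmean]
  simp only [hsmul]

variable {μ ν}

theorem exists_points_squared_discrepancy_le_general (hS : MeasurableSet S) {ρ : Ω → ℝ}
    (hprob : ∫ ω, ρ ω ∂μ = 1) (hpos : ∀ᵐ ω ∂μ, 0 < ρ ω)
    (hint : Integrable (fun ω => ν.real (Prod.mk ω ⁻¹' S) / ρ ω) μ)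
    {A : Set Ω} (hA : ∀ᵐ ω ∂μ, ω ∈ A) {N : ℕ} (hN : 0 < N) :
    ∃ t : Fin N → Ω, (∀ k, t k ∈ A) ∧ (∀ k, 0 < ρ (t k)) ∧
      ∫ x, ((∑ k, 1 / (N * ρ (t k)) * S.indicator 1 (t k, x)) - μ.real ((·, x) ⁻¹' S)) ^ 2 ∂ν ≤
        (∫ ω, ν.real (Prod.mk ω ⁻¹' S) / ρ ω ∂μ - ∫ x, μ.real ((·, x) ⁻¹' S) ^ 2 ∂ν) / N := by
  simp only [← norm_sectionLp_sq ν hS, ← norm_fiberMassLp_sq μ ν hS,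
    ← norm_sum_smul_sectionLp_sub_sq μ ν hS] at hint ⊢
  simpa only [Finset.smul_sum, smul_smul, ← mul_inv, one_div] using
    (hasWeakIntegral_sectionLp μ ν hS).exists_norm_importance_average_sub_sq_le
      hprob hpos hint hA hN

end SetSystem

section Box

/-- The pairs `(t, x)` with `t` strictly below `x` in every coordinate, so that for `0 ≤ t` the
condition reads `t ∈ [0, x)`. -/
def strictlyBelow (ι : Type*) : Set ((ι → ℝ) × (ι → ℝ)) := {p | ∀ j, p.1 j < p.2 j}

variable {ι : Type*}

lemma indicator_strictlyBelow (t x : ι → ℝ) [Decidable (∀ j, t j < x j)] :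
    (strictlyBelow ι).indicator (1 : (ι → ℝ) × (ι → ℝ) → ℝ) (t, x) =
      if ∀ j, t j < x j then 1 else 0 := by
  simp [Set.indicator_apply, strictlyBelow]

lemma measurableSet_strictlyBelow [Countable ι] : MeasurableSet (strictlyBelow ι) := by
  rw [strictlyBelow, Set.ofPred_forall]
  exact .iInter fun j => measurableSet_lt (by fun_prop) (by fun_prop)

variable [Fintype ι]

instance isFiniteMeasure_volume_restrict_Icc (a b : ι → ℝ) :
    IsFiniteMeasure ((volume : Measure (ι → ℝ)).restrict (Set.Icc a b)) :=
  isFiniteMeasure_restrict.2 isCompact_Icc.measure_ne_top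

lemma volume_restrict_Icc_pi (a b : ι → ℝ) :
    (volume : Measure (ι → ℝ)).restrict (Set.Icc a b) =
      Measure.pi fun i => volume.restrict (Set.Icc (a i) (b i)) := by
  rw [← Set.pi_univ_Icc, volume_pi, Measure.restrict_pi_pi]

lemma measureReal_restrict_Icc_univ_pi (a b : ι → ℝ) (s : ι → Set ℝ) :
    (volume.restrict (Set.Icc a b)).real (Set.univ.pi s) =
      ∏ i, (volume.restrict (Set.Icc (a i) (b i))).real (s i) := by
  simp only [volume_restrict_Icc_pi, measureReal_def, Measure.pi_pi, ENNReal.toReal_prod]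

lemma measureReal_restrict_Icc_Ioi {a b t : ℝ} (ht : t ∈ Set.Icc a b) :
    (volume.restrict (Set.Icc a b)).real (Set.Ioi t) = b - t := by
  have inter : Set.Ioi t ∩ Set.Icc a b = Set.Ioc t b := by
    ext x; simp only [Set.mem_inter_iff, Set.mem_Ioi, Set.mem_Icc, Set.mem_Ioc]; grind
  rw [measureReal_restrict_apply measurableSet_Ioi, inter, Real.volume_real_Ioc_of_le ht.2]

lemma measureReal_restrict_Icc_Iio {a b x : ℝ} (hx : x ∈ Set.Icc a b) :
    (volume.restrict (Set.Icc a b)).real (Set.Iio x) = x - a := by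
  have inter : Set.Iio x ∩ Set.Icc a b = Set.Ico a x := by
    ext t; simp only [Set.mem_inter_iff, Set.mem_Iio, Set.mem_Icc, Set.mem_Ico]; grind
  rw [measureReal_restrict_apply measurableSet_Iio, inter, Real.volume_real_Ico_of_le hx.1]

lemma setIntegral_Icc_zero_one_pow (n : ℕ) : ∫ x in Set.Icc (0 : ℝ) 1, x ^ n = ((n : ℝ) + 1)⁻¹ := by
  rw [integral_Icc_eq_integral_Ioc, ← intervalIntegral.integral_of_le zero_le_one, integral_pow]
  simp

lemma setIntegral_Icc_zero_one_prod_pow (n : ℕ) :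
    ∫ x in Set.Icc (0 : ι → ℝ) 1, (∏ j, x j) ^ n =
      ((n : ℝ) + 1) ^ (-(Fintype.card ι : ℤ)) := by
  simp only [volume_restrict_Icc_pi, ← Finset.prod_pow]
  rw [integral_fintype_prod_eq_prod (f := fun (_ : ι) (y : ℝ) => y ^ n)]
  simp [setIntegral_Icc_zero_one_pow]

lemma measureReal_restrict_Icc_mk_preimage_strictlyBelow {a b t : ι → ℝ} (ht : t ∈ Set.Icc a b) :
    (volume.restrict (Set.Icc a b)).real (Prod.mk t ⁻¹' strictlyBelow ι) = ∏ j, (b j - t j) := by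
  have section_eq : Prod.mk t ⁻¹' strictlyBelow ι = Set.univ.pi fun j => Set.Ioi (t j) := by
    ext x; simp [strictlyBelow]
  rw [section_eq, measureReal_restrict_Icc_univ_pi]
  exact Finset.prod_congr rfl fun j _ => measureReal_restrict_Icc_Ioi ⟨ht.1 j, ht.2 j⟩

lemma measureReal_restrict_Icc_preimage_strictlyBelow {a b x : ι → ℝ} (hx : x ∈ Set.Icc a b) :
    (volume.restrict (Set.Icc a b)).real ((·, x) ⁻¹' strictlyBelow ι) = ∏ j, (x j - a j) := by
  have section_eq : (·, x) ⁻¹' strictlyBelow ι = Set.univ.pi fun j => Set.Iio (x j) := by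
    ext t; simp [strictlyBelow]
  rw [section_eq, measureReal_restrict_Icc_univ_pi]
  exact Finset.prod_congr rfl fun j _ => measureReal_restrict_Icc_Iio ⟨hx.1 j, hx.2 j⟩

end Box

/-- There exist deterministic points `t₁,…,t_N ∈ [0,1]^d` with
`ρd(t_k) > 0` such that, with weights `a_k = 1/(N ρd(t_k))`, the squared
`L₂`-discrepancy is at most `(C - 3^{-d})/N`. -/
theorem exists_points_squared_discrepancy_le
    (d N : ℕ) (hN : 0 < N)
    (ρd : (Fin d → ℝ) → ℝ)
    (hmeas : Measurable ρd)
    (hnonneg : ∀ t, 0 ≤ ρd t)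
    (hprob : ∫ t in Set.Icc (0 : Fin d → ℝ) 1, ρd t = 1)
    (hpos : ∀ᵐ t ∂(volume.restrict (Set.Icc (0 : Fin d → ℝ) 1)), 0 < ρd t)
    (hint : IntegrableOn (fun t : Fin d → ℝ => (∏ j, (1 - t j)) / ρd t)
      (Set.Icc (0 : Fin d → ℝ) 1))
    (C : ℝ)
    (hC : C = ∫ t in Set.Icc (0 : Fin d → ℝ) 1, (∏ j, (1 - t j)) / ρd t) :
    ∃ t : Fin N → Fin d → ℝ,
      (∀ k, t k ∈ Set.Icc (0 : Fin d → ℝ) 1) ∧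
      (∀ k, 0 < ρd (t k)) ∧
      (∫ x in Set.Icc (0 : Fin d → ℝ) 1,
          ((∑ k, (1 / (N * ρd (t k))) *
              (if ∀ j, t k j < x j then (1 : ℝ) else 0)) - ∏ j, x j) ^ 2)
        ≤ (C - (3 : ℝ) ^ (-(d : ℤ))) / N := by
  have mass_above : Set.EqOn (fun t => (volume.restrict (Set.Icc 0 1)).real
      (Prod.mk t ⁻¹' strictlyBelow (Fin d)) / ρd t) (fun t => (∏ j, (1 - t j)) / ρd t)
      (Set.Icc 0 1) :=
    fun t ht => congrArg (· / ρd t) (measureReal_restrict_Icc_mk_preimage_strictlyBelow ht)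
  have mass_below {x : Fin d → ℝ} (hx : x ∈ Set.Icc 0 1) :
      (volume.restrict (Set.Icc 0 1)).real ((·, x) ⁻¹' strictlyBelow (Fin d)) = ∏ j, x j := by
    simp only [measureReal_restrict_Icc_preimage_strictlyBelow hx, Pi.zero_apply, sub_zero]
  obtain ⟨t, ht, hρt, hle⟩ := exists_points_squared_discrepancy_le_general
    measurableSet_strictlyBelow hprob hpos (hint.congr_fun mass_above.symm measurableSet_Icc)
    (ae_restrict_mem measurableSet_Icc) hN
  refine ⟨t, ht, hρt, ?_⟩
  rw [setIntegral_congr_fun measurableSet_Icc mass_above, ← hC,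
    setIntegral_congr_fun measurableSet_Icc fun x hx => congrArg (· ^ 2) (mass_below hx),
    setIntegral_Icc_zero_one_prod_pow] at hle
  convert hle using 1
  · refine setIntegral_congr_fun measurableSet_Icc fun x hx => ?_
    simp only [mass_below hx, indicator_strictlyBelow]
  · norm_num [Fintype.card_fin]
end

section
/- Let d, N ∈ ℕ and let ρ_d*(t) = ∏_{j=1}^d (3/2)√(1−t_j) on [0,1]^d. If t_1,…,t_N are i.i.d. random points in [0,1]^d with law ρ_d*(t)dt and the weights are a_k = 1/(N ρ_d*(t_k)), then E[∫_{[0,1]^d} Δ(x)² dx] = ((4/9)^d − 3^{−d})/N, and consequently the normalized average discrepancy satisfies 3^{d/2}·(E[∫_{[0,1]^d} Δ(x)² dx])^{1/2} ≤ (4/3)^{d/2}·N^{−1/2}. -/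
open MeasureTheory

/-!
Weighting the points by `1/(N ρ(t_k))` makes `Δ(x) + x_1⋯x_d` the mean of `N` independent copies of
`f_x(t) = 1_{[0,x)}(t) / ρ(t)`, where `t` has law `ρ(t) dt` and `E f_x = x_1⋯x_d`. Hence
`E Δ(x)² = Var f_x / N`, and integrating over `x` gives
`E ∫ Δ² = (E ∫ f_x(t)² dx - ∫ (x_1⋯x_d)² dx) / N`. The density `ρ` is chosen so that the inner
integral `∫ f_x(t)² dx = ∏ (1 - t_j) / ρ(t)²` has the value `(4/9)^d` for every `t`.
-/

section ProductMeasures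

variable {ι : Type*} [Fintype ι] {α : ι → Type*}

theorem volume_restrict_Icc_eq_pi [∀ i, MeasureSpace (α i)] [∀ i, Preorder (α i)]
    [∀ i, SigmaFinite (volume : Measure (α i))] (a b : ∀ i, α i) :
    (volume : Measure (∀ i, α i)).restrict (Set.Icc a b) =
      Measure.pi fun i ↦ volume.restrict (Set.Icc (a i) (b i)) := by
  rw [← Set.pi_univ_Icc, volume_pi, Measure.restrict_pi_pi]

theorem setIntegral_Icc_prod_eq_prod [∀ i, MeasureSpace (α i)] [∀ i, Preorder (α i)]
    [∀ i, SigmaFinite (volume : Measure (α i))] (a b : ∀ i, α i) (f : ∀ i, α i → ℝ) :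
    ∫ x in Set.Icc a b, ∏ i, f i (x i) = ∏ i, ∫ t in Set.Icc (a i) (b i), f i t := by
  rw [volume_restrict_Icc_eq_pi, integral_fintype_prod_eq_prod]

variable [∀ i, MeasurableSpace (α i)] {μ : ∀ i, Measure (α i)} [∀ i, SigmaFinite (μ i)]
  {ρ : ∀ i, α i → ℝ}

theorem pi_withDensity_ofReal (hρ : ∀ i, Integrable (ρ i) (μ i)) (hρ_nonneg : ∀ i t, 0 ≤ ρ i t) :
    Measure.pi (fun i ↦ (μ i).withDensity fun t ↦ ENNReal.ofReal (ρ i t)) =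
      (Measure.pi μ).withDensity fun t ↦ ENNReal.ofReal (∏ i, ρ i (t i)) := by
  have (i : ι) : IsFiniteMeasure ((μ i).withDensity fun t ↦ ENNReal.ofReal (ρ i t)) :=
    isFiniteMeasure_withDensity_ofReal (hρ i).2
  refine Measure.pi_eq fun s hs ↦ ?_
  calc
    (Measure.pi μ).withDensity (fun t ↦ ENNReal.ofReal (∏ i, ρ i (t i))) (Set.univ.pi s)
    _ = ENNReal.ofReal (∫ t, ∏ i, ρ i (t i) ∂Measure.pi fun i ↦ (μ i).restrict (s i)) := by
      rw [withDensity_apply _ (.univ_pi hs), Measure.restrict_pi_pi,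
        ofReal_integral_eq_lintegral_ofReal (.fintype_prod_dep fun i ↦ (hρ i).restrict)
          (.of_forall fun t ↦ Finset.prod_nonneg fun i _ ↦ hρ_nonneg i (t i))]
    _ = ∏ i, ENNReal.ofReal (∫ t in s i, ρ i t ∂μ i) := by
      rw [integral_fintype_prod_eq_prod,
        ENNReal.ofReal_prod_of_nonneg fun i _ ↦ integral_nonneg (hρ_nonneg i)]
    _ = ∏ i, (μ i).withDensity (fun t ↦ ENNReal.ofReal (ρ i t)) (s i) := by
      refine Finset.prod_congr rfl fun i _ ↦ ?_
      rw [withDensity_apply _ (hs i), ofReal_integral_eq_lintegral_ofReal (hρ i).restrict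
        (.of_forall (hρ_nonneg i))]

end ProductMeasures

section Density

variable {Ω : Type*} [MeasurableSpace Ω] {μ : Measure Ω} {ρ : Ω → ℝ}

theorem integral_withDensity_ofReal (hρ : Measurable ρ) (hρ_nonneg : ∀ t, 0 ≤ ρ t) (f : Ω → ℝ) :
    ∫ t, f t ∂μ.withDensity (fun t ↦ ENNReal.ofReal (ρ t)) = ∫ t, ρ t * f t ∂μ := by
  rw [integral_withDensity_eq_integral_toReal_smul hρ.ennreal_ofReal (by simp)]
  simp only [ENNReal.toReal_ofReal (hρ_nonneg _), smul_eq_mul]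

theorem integral_inv_mul_withDensity_ofReal (hρ : Measurable ρ) (hρ_nonneg : ∀ t, 0 ≤ ρ t)
    (hρ_ne : ∀ᵐ t ∂μ, ρ t ≠ 0) (f : Ω → ℝ) :
    ∫ t, (ρ t)⁻¹ * f t ∂μ.withDensity (fun t ↦ ENNReal.ofReal (ρ t)) = ∫ t, f t ∂μ := by
  rw [integral_withDensity_ofReal hρ hρ_nonneg]
  refine integral_congr_ae ?_
  filter_upwards [hρ_ne] with t ht
  exact mul_inv_cancel_left₀ ht (f t)

end Density

section MonteCarlo

open ProbabilityTheory

variable {ι Ω X : Type*} [Fintype ι] [MeasurableSpace Ω] [MeasurableSpace X]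
  {P : Measure Ω} {κ : Measure X} [SFinite κ] {f : Ω → X → ℝ}

theorem ae_memLp_two_fst_section [SFinite P]
    (hf : MemLp (Function.uncurry f) 2 (P.prod κ)) :
    ∀ᵐ x ∂κ, MemLp (fun t ↦ f t x) 2 P := by
  filter_upwards [hf.aestronglyMeasurable.prod_swap.prodMk_left, hf.integrable_sq.prod_left_ae]
    with x h_meas h_sq
  exact (memLp_two_iff_integrable_sq h_meas).mpr h_sq

variable [IsProbabilityMeasure P]

theorem integral_pi_sampleMean_sub_integral_sq [Nonempty ι] {f : Ω → ℝ} (hf : MemLp f 2 P) :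
    ∫ T, ((∑ i, f (T i)) / Fintype.card ι - ∫ t, f t ∂P) ^ 2 ∂Measure.pi (fun _ : ι ↦ P) =
      Var[f; P] / Fintype.card ι := by
  have hcard : (Fintype.card ι : ℝ) ≠ 0 := Nat.cast_ne_zero.mpr Fintype.card_ne_zero
  have h_eval (i : ι) : MemLp (fun T : ι → Ω ↦ f (T i)) 2 (Measure.pi fun _ ↦ P) :=
    hf.comp_measurePreserving (measurePreserving_eval _ i)
  have h_sum : MemLp (∑ i, fun T : ι → Ω ↦ f (T i)) 2 (Measure.pi fun _ ↦ P) :=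
    memLp_finsetSum' _ fun i _ ↦ h_eval i
  have h_mean : ∫ T, (∑ i, fun T : ι → Ω ↦ f (T i)) T ∂Measure.pi (fun _ : ι ↦ P) =
      Fintype.card ι * ∫ t, f t ∂P := by
    simp only [Finset.sum_apply]
    rw [integral_finsetSum _ fun i _ ↦ (h_eval i).integrable one_le_two]
    simp [integral_comp_eval (μ := fun _ : ι ↦ P) hf.aestronglyMeasurable]
  calc
    ∫ T, ((∑ i, f (T i)) / Fintype.card ι - ∫ t, f t ∂P) ^ 2 ∂Measure.pi (fun _ : ι ↦ P)
    _ = Var[∑ i, fun T : ι → Ω ↦ f (T i); Measure.pi fun _ ↦ P] / Fintype.card ι ^ 2 := by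
      rw [variance_eq_integral h_sum.aemeasurable, h_mean, ← integral_div]
      refine integral_congr_ae (.of_forall fun T ↦ ?_)
      simp only [Finset.sum_apply]
      field_simp
    _ = Var[f; P] / Fintype.card ι := by
      rw [variance_sum_pi fun _ ↦ hf, Finset.sum_const, Finset.card_univ, nsmul_eq_mul]
      field_simp

theorem memLp_two_integral_fst (hf : MemLp (Function.uncurry f) 2 (P.prod κ)) :
    MemLp (fun x ↦ ∫ t, f t x ∂P) 2 κ := by
  have h_meas : AEStronglyMeasurable (fun x ↦ ∫ t, f t x ∂P) κ :=
    hf.aestronglyMeasurable.prod_swap.integral_prod_right'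
  refine (memLp_two_iff_integrable_sq h_meas).mpr
    (hf.integrable_sq.integral_prod_right.mono' (h_meas.pow 2) ?_)
  filter_upwards [ae_memLp_two_fst_section hf] with x hx
  have h_var := variance_eq_sub hx ▸ variance_nonneg (fun t ↦ f t x) P
  simpa using h_var

theorem memLp_two_sampleMean_sub_integral (hf : MemLp (Function.uncurry f) 2 (P.prod κ)) :
    MemLp (fun p : (ι → Ω) × X ↦ (∑ i, f (p.1 i) p.2) / Fintype.card ι - ∫ t, f t p.2 ∂P) 2
      ((Measure.pi fun _ ↦ P).prod κ) := by
  have h_eval (i : ι) : MemLp (fun p : (ι → Ω) × X ↦ f (p.1 i) p.2) 2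
      ((Measure.pi fun _ ↦ P).prod κ) :=
    hf.comp_measurePreserving ((measurePreserving_eval (fun _ ↦ P) i).prod (.id κ))
  simp only [div_eq_inv_mul]
  exact ((memLp_finsetSum _ fun i _ ↦ h_eval i).const_mul _).sub
    ((memLp_two_integral_fst hf).comp_measurePreserving measurePreserving_snd)

theorem integral_integral_sampleMean_sub_integral_sq [Nonempty ι]
    (hf : MemLp (Function.uncurry f) 2 (P.prod κ)) :
    ∫ T, ∫ x, ((∑ i, f (T i) x) / Fintype.card ι - ∫ t, f t x ∂P) ^ 2 ∂κ
        ∂Measure.pi (fun _ : ι ↦ P) =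
      (∫ t, ∫ x, f t x ^ 2 ∂κ ∂P - ∫ x, (∫ t, f t x ∂P) ^ 2 ∂κ) / Fintype.card ι := by
  have h_var : ∀ᵐ x ∂κ,
      ∫ T, ((∑ i, f (T i) x) / Fintype.card ι - ∫ t, f t x ∂P) ^ 2 ∂Measure.pi (fun _ : ι ↦ P) =
        (∫ t, f t x ^ 2 ∂P - (∫ t, f t x ∂P) ^ 2) / Fintype.card ι := by
    filter_upwards [ae_memLp_two_fst_section hf] with x hx
    rw [integral_pi_sampleMean_sub_integral_sq hx, variance_eq_sub hx]
    rfl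
  have h_sq : Integrable (fun p : Ω × X ↦ f p.1 p.2 ^ 2) (P.prod κ) := hf.integrable_sq
  rw [integral_integral_swap (memLp_two_sampleMean_sub_integral hf).integrable_sq,
    integral_congr_ae h_var, integral_div,
    integral_sub h_sq.integral_prod_right (memLp_two_integral_fst hf).integrable_sq,
    ← integral_integral_swap (f := fun t x ↦ f t x ^ 2) h_sq]

end MonteCarlo

section OneDimensional

/-- The one-dimensional factor `t ↦ (3/2)√(1 - t)` of the optimal product density `ρ_d*`. -/
noncomputable def optimalDensity (t : ℝ) : ℝ := 3 / 2 * √(1 - t)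

/-- The probability law on `[0, 1]` with density `optimalDensity`. Its powers `Measure.pi` are the
laws `ρ_d*(t) dt` of the sample points. -/
noncomputable def optimalLaw : Measure ℝ :=
  (volume.restrict (Set.Icc 0 1)).withDensity fun t ↦ ENNReal.ofReal (optimalDensity t)

/-- The one-dimensional importance-sampling estimator `1_{[0,x)}(t) / ρ(t)` of the interval length
`x`; the condition `0 ≤ t` is omitted since the sample points satisfy it. The estimator of the
volume of a box is a product of these. -/
noncomputable def weightedIndicator (t x : ℝ) : ℝ :=
  (optimalDensity t)⁻¹ * if t < x then 1 else 0

theorem optimalDensity_nonneg (t : ℝ) : 0 ≤ optimalDensity t := by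
  unfold optimalDensity
  positivity

theorem optimalDensity_pos {t : ℝ} (ht : t < 1) : 0 < optimalDensity t :=
  mul_pos (by norm_num) (Real.sqrt_pos.mpr (sub_pos.mpr ht))

theorem continuous_optimalDensity : Continuous optimalDensity := by
  unfold optimalDensity
  fun_prop

theorem integrable_optimalDensity : IntegrableOn optimalDensity (Set.Icc 0 1) :=
  continuous_optimalDensity.integrableOn_Icc

theorem integral_optimalDensity : ∫ t in Set.Icc 0 1, optimalDensity t = 1 := by
  rw [integral_Icc_eq_integral_Ioc, ← intervalIntegral.integral_of_le zero_le_one]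
  simp only [optimalDensity, Real.sqrt_eq_rpow]
  rw [intervalIntegral.integral_const_mul,
    intervalIntegral.integral_comp_sub_left (fun t ↦ t ^ (1 / 2 : ℝ)),
    integral_rpow (by norm_num)]
  norm_num

instance isProbabilityMeasure_optimalLaw : IsProbabilityMeasure optimalLaw := by
  constructor
  rw [optimalLaw, withDensity_apply _ .univ, Measure.restrict_univ,
    ← ofReal_integral_eq_lintegral_ofReal integrable_optimalDensity
      (.of_forall optimalDensity_nonneg),
    integral_optimalDensity, ENNReal.ofReal_one]

theorem ae_mem_Ico_zero_one : ∀ᵐ t ∂volume.restrict (Set.Icc (0 : ℝ) 1), t ∈ Set.Ico 0 1 := by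
  rw [← restrict_Ico_eq_restrict_Icc]
  exact ae_restrict_mem measurableSet_Ico

theorem ae_optimalLaw_mem_Ico : ∀ᵐ t ∂optimalLaw, t ∈ Set.Ico 0 1 :=
  (withDensity_absolutelyContinuous _ _).ae_le ae_mem_Ico_zero_one

theorem measurable_weightedIndicator :
    Measurable fun p : ℝ × ℝ ↦ weightedIndicator p.1 p.2 := by
  have h_ite : Measurable fun p : ℝ × ℝ ↦ if p.1 < p.2 then (1 : ℝ) else 0 :=
    .ite (measurableSet_lt measurable_fst measurable_snd) measurable_const measurable_const
  exact (continuous_optimalDensity.measurable.comp measurable_fst).inv.mul h_ite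

theorem integral_weightedIndicator {x : ℝ} (hx : x ∈ Set.Icc 0 1) :
    ∫ t, weightedIndicator t x ∂optimalLaw = x := by
  have h_ne : ∀ᵐ t ∂volume.restrict (Set.Icc 0 1), optimalDensity t ≠ 0 :=
    ae_mem_Ico_zero_one.mono fun t ht ↦ (optimalDensity_pos ht.2).ne'
  have h_ind (t : ℝ) : (if t < x then (1 : ℝ) else 0) = (Set.Iio x).indicator 1 t := by
    simp [Set.indicator_apply]
  have h_inter : Set.Iio x ∩ Set.Icc 0 1 = Set.Ico 0 x := by grind
  simp only [weightedIndicator, optimalLaw]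
  rw [integral_inv_mul_withDensity_ofReal continuous_optimalDensity.measurable
    optimalDensity_nonneg h_ne]
  simp only [h_ind]
  rw [integral_indicator_one measurableSet_Iio, measureReal_restrict_apply measurableSet_Iio,
    h_inter, Real.volume_real_Ico_of_le hx.1, sub_zero]

theorem setIntegral_weightedIndicator_sq {t : ℝ} (ht : t ∈ Set.Ico 0 1) :
    ∫ x in Set.Icc 0 1, weightedIndicator t x ^ 2 = 4 / 9 := by
  have h_sub : 0 < 1 - t := sub_pos.mpr ht.2
  have h_ind (x : ℝ) :
      weightedIndicator t x ^ 2 = (optimalDensity t ^ 2)⁻¹ * (Set.Ioi t).indicator 1 x := by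
    simp [weightedIndicator, Set.indicator_apply]
  have h_inter : Set.Ioi t ∩ Set.Icc 0 1 = Set.Ioc t 1 := by grind
  simp only [h_ind]
  rw [integral_const_mul, integral_indicator_one measurableSet_Ioi,
    measureReal_restrict_apply measurableSet_Ioi, h_inter, Real.volume_real_Ioc_of_le ht.2.le,
    optimalDensity, mul_pow, Real.sq_sqrt h_sub.le]
  field_simp
  norm_num

theorem setIntegral_Icc_zero_one_sq : ∫ x in Set.Icc (0 : ℝ) 1, x ^ 2 = 1 / 3 := by
  rw [integral_Icc_eq_integral_Ioc, ← intervalIntegral.integral_of_le zero_le_one, integral_pow]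
  norm_num

end OneDimensional

section Multidimensional

variable {ι : Type*} [Fintype ι]

theorem prod_weightedIndicator (t x : ι → ℝ) [Decidable (∀ j, t j < x j)] :
    ∏ j, weightedIndicator (t j) (x j) =
      (∏ j, optimalDensity (t j))⁻¹ * if ∀ j, t j < x j then 1 else 0 := by
  simp only [weightedIndicator, Finset.prod_mul_distrib, Finset.prod_inv_distrib,
    Fintype.prod_boole]
  congr

theorem integral_prod_weightedIndicator {x : ι → ℝ} (hx : x ∈ Set.Icc 0 1) :
    ∫ t, ∏ j, weightedIndicator (t j) (x j) ∂Measure.pi (fun _ ↦ optimalLaw) = ∏ j, x j := by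
  rw [integral_fintype_prod_eq_prod fun j t ↦ weightedIndicator t (x j)]
  exact Finset.prod_congr rfl fun j _ ↦ integral_weightedIndicator ⟨hx.1 j, hx.2 j⟩

theorem setIntegral_prod_weightedIndicator_sq {t : ι → ℝ} (ht : ∀ j, t j ∈ Set.Ico 0 1) :
    ∫ x in Set.Icc (0 : ι → ℝ) 1, (∏ j, weightedIndicator (t j) (x j)) ^ 2 =
      (4 / 9) ^ Fintype.card ι := by
  simp only [← Finset.prod_pow]
  rw [setIntegral_Icc_prod_eq_prod 0 1 fun j y ↦ weightedIndicator (t j) y ^ 2]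
  exact Finset.prod_eq_pow_card fun j _ ↦ setIntegral_weightedIndicator_sq (ht j)

theorem setIntegral_Icc_zero_one_prod_sq :
    ∫ x in Set.Icc (0 : ι → ℝ) 1, (∏ j, x j) ^ 2 = (1 / 3) ^ Fintype.card ι := by
  simp only [← Finset.prod_pow]
  rw [setIntegral_Icc_prod_eq_prod 0 1 fun _ y ↦ y ^ 2]
  exact Finset.prod_eq_pow_card fun _ _ ↦ setIntegral_Icc_zero_one_sq

theorem ae_pi_optimalLaw_setIntegral_sq :
    ∀ᵐ t ∂Measure.pi (fun _ : ι ↦ optimalLaw),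
      ∫ x in Set.Icc (0 : ι → ℝ) 1, (∏ j, weightedIndicator (t j) (x j)) ^ 2 =
        (4 / 9) ^ Fintype.card ι := by
  have h_mem : ∀ᵐ t ∂Measure.pi (fun _ : ι ↦ optimalLaw), ∀ j, t j ∈ Set.Ico 0 1 :=
    ae_all_iff.mpr fun j ↦ (Measure.quasiMeasurePreserving_eval _ j).ae ae_optimalLaw_mem_Ico
  exact h_mem.mono fun t ht ↦ setIntegral_prod_weightedIndicator_sq ht

theorem memLp_two_prod_weightedIndicator :
    MemLp (Function.uncurry fun t x : ι → ℝ ↦ ∏ j, weightedIndicator (t j) (x j)) 2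
      ((Measure.pi fun _ ↦ optimalLaw).prod (volume.restrict (Set.Icc 0 1))) := by
  have h_meas : Measurable
      (Function.uncurry fun t x : ι → ℝ ↦ ∏ j, weightedIndicator (t j) (x j)) :=
    Finset.measurable_prod _ fun j _ ↦ measurable_weightedIndicator.comp
      (f := fun p : (ι → ℝ) × (ι → ℝ) ↦ (p.1 j, p.2 j)) (by fun_prop)
  rw [memLp_two_iff_integrable_sq h_meas.aestronglyMeasurable,
    integrable_prod_iff (h_meas.pow_const 2).aestronglyMeasurable]
  constructor
  · filter_upwards [ae_pi_optimalLaw_setIntegral_sq] with t ht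
    exact .of_integral_ne_zero (ht.trans_ne (by positivity))
  · refine (integrable_const ((4 / 9) ^ Fintype.card ι)).congr ?_
    filter_upwards [ae_pi_optimalLaw_setIntegral_sq] with t ht
    simpa only [Real.norm_of_nonneg (sq_nonneg _), Function.uncurry_apply_pair] using ht.symm

theorem integral_pi_optimalLaw_discrepancy_sq {κ : Type*} [Fintype κ] [Nonempty κ] :
    ∫ T : κ → ι → ℝ, (∫ x in Set.Icc (0 : ι → ℝ) 1,
        ((∑ k, ∏ j, weightedIndicator (T k j) (x j)) / Fintype.card κ - ∏ j, x j) ^ 2)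
        ∂Measure.pi (fun _ : κ ↦ Measure.pi fun _ : ι ↦ optimalLaw) =
      ((4 / 9) ^ Fintype.card ι - (1 / 3) ^ Fintype.card ι) / Fintype.card κ := by
  have h_mean : ∀ x ∈ Set.Icc (0 : ι → ℝ) 1, ∏ j, x j =
      ∫ t, ∏ j, weightedIndicator (t j) (x j) ∂Measure.pi (fun _ ↦ optimalLaw) :=
    fun x hx ↦ (integral_prod_weightedIndicator hx).symm
  have h_mean_sq : ∫ x in Set.Icc (0 : ι → ℝ) 1,
      (∫ t, ∏ j, weightedIndicator (t j) (x j) ∂Measure.pi fun _ ↦ optimalLaw) ^ 2 =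
        (1 / 3) ^ Fintype.card ι := by
    rw [← setIntegral_Icc_zero_one_prod_sq]
    exact setIntegral_congr_fun measurableSet_Icc fun x hx ↦ by simp only [h_mean x hx]
  have h_sq : ∫ t, (∫ x in Set.Icc (0 : ι → ℝ) 1, (∏ j, weightedIndicator (t j) (x j)) ^ 2)
      ∂Measure.pi (fun _ ↦ optimalLaw) = (4 / 9) ^ Fintype.card ι := by
    rw [integral_congr_ae ae_pi_optimalLaw_setIntegral_sq]
    simp
  rw [← h_sq, ← h_mean_sq,
    ← integral_integral_sampleMean_sub_integral_sq memLp_two_prod_weightedIndicator]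
  refine integral_congr_ae (.of_forall fun T ↦ ?_)
  exact setIntegral_congr_fun measurableSet_Icc fun x hx ↦ by simp only [h_mean x hx]

theorem integral_pi_optimalLaw {κ : Type*} [Fintype κ] (F : (κ → ι → ℝ) → ℝ) :
    ∫ T, F T ∂Measure.pi (fun _ : κ ↦ Measure.pi fun _ : ι ↦ optimalLaw) =
      ∫ T in Set.Icc (0 : κ → ι → ℝ) 1, (∏ k, ∏ j, optimalDensity (T k j)) * F T := by
  have h_nonneg (t : ι → ℝ) : 0 ≤ ∏ j, optimalDensity (t j) :=
    Finset.prod_nonneg fun j _ ↦ optimalDensity_nonneg (t j)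
  have h_meas : Measurable fun T : κ → ι → ℝ ↦ ∏ k, ∏ j, optimalDensity (T k j) := by
    have := continuous_optimalDensity
    fun_prop
  have h_int : Integrable (fun t : ι → ℝ ↦ ∏ j, optimalDensity (t j))
      (Measure.pi fun _ ↦ volume.restrict (Set.Icc 0 1)) :=
    .fintype_prod fun _ ↦ integrable_optimalDensity
  simp only [optimalLaw]
  rw [pi_withDensity_ofReal (fun _ ↦ integrable_optimalDensity) fun _ ↦ optimalDensity_nonneg,
    pi_withDensity_ofReal (fun _ ↦ h_int) fun _ ↦ h_nonneg,
    integral_withDensity_ofReal h_meas fun T ↦ Finset.prod_nonneg fun k _ ↦ h_nonneg (T k)]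
  simp only [volume_restrict_Icc_eq_pi, Pi.zero_apply, Pi.one_apply]

end Multidimensional

theorem rpow_half_mul_sqrt_le_of_le_pow_div {a b c e : ℝ} (d : ℕ)
    (ha : 0 ≤ a) (hb : 0 ≤ b) (hc : 0 ≤ c) (he : e ≤ b ^ d / c) :
    a ^ ((d : ℝ) / 2) * √e ≤ (a * b) ^ ((d : ℝ) / 2) * c ^ (-(1 : ℝ) / 2) := by
  have h_sqrt_pow : √(b ^ d) = √b ^ d := by
    rw [Real.sqrt_eq_iff_mul_self_eq (by positivity) (by positivity), ← mul_pow,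
      Real.mul_self_sqrt hb]
  calc
    a ^ ((d : ℝ) / 2) * √e ≤ a ^ ((d : ℝ) / 2) * √(b ^ d / c) := by gcongr
    _ = (a * b) ^ ((d : ℝ) / 2) * c ^ (-(1 : ℝ) / 2) := by
      simp only [Real.rpow_div_two_eq_sqrt _ ha, Real.rpow_div_two_eq_sqrt _ (mul_nonneg ha hb),
        Real.rpow_div_two_eq_sqrt _ hc, Real.rpow_natCast, Real.rpow_neg_one]
      rw [Real.sqrt_div (by positivity), Real.sqrt_mul ha, mul_pow, h_sqrt_pow]
      ring

/-- For i.i.d. points drawn from the optimal product density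
`ρd*(t) = ∏_j (3/2)√(1-t_j)` with weights `a_k = 1/(N ρd*(t_k))`, the expected
squared `L₂`-discrepancy equals `((4/9)^d - 3^{-d})/N`, and hence the
normalized average discrepancy satisfies
`3^{d/2} √E ≤ (4/3)^{d/2} N^{-1/2}`. -/
theorem expected_squared_discrepancy_optimal_density
    (d N : ℕ) (hN : 0 < N)
    (ρd : (Fin d → ℝ) → ℝ)
    (hρd : ∀ t, ρd t = ∏ j, (3 / 2) * Real.sqrt (1 - t j))
    (E : ℝ)
    (hE : E = ∫ T in Set.Icc (0 : Fin N → Fin d → ℝ) 1,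
        (∏ k, ρd (T k)) *
          ∫ x in Set.Icc (0 : Fin d → ℝ) 1,
            ((∑ k, (1 / (N * ρd (T k))) *
                (if ∀ j, T k j < x j then (1 : ℝ) else 0)) - ∏ j, x j) ^ 2) :
    E = ((4 / 9 : ℝ) ^ d - (3 : ℝ) ^ (-(d : ℤ))) / N ∧
    (3 : ℝ) ^ ((d : ℝ) / 2) * Real.sqrt E
      ≤ (4 / 3 : ℝ) ^ ((d : ℝ) / 2) * (N : ℝ) ^ (-(1 : ℝ) / 2) := by
  have : NeZero N := ⟨hN.ne'⟩
  have h_density (t : Fin d → ℝ) : ρd t = ∏ j, optimalDensity (t j) := hρd t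
  have h_weight (t x : Fin d → ℝ) : 1 / (N * ρd t) * (if ∀ j, t j < x j then (1 : ℝ) else 0) =
      (∏ j, weightedIndicator (t j) (x j)) / N := by
    rw [prod_weightedIndicator, h_density]
    ring
  have h_eq : E = ((4 / 9 : ℝ) ^ d - (3 : ℝ) ^ (-(d : ℤ))) / N := by
    simp only [hE, h_weight, ← Finset.sum_div]
    simp only [h_density]
    rw [← integral_pi_optimalLaw]
    simpa using integral_pi_optimalLaw_discrepancy_sq (ι := Fin d) (κ := Fin N)
  have h_le : E ≤ (4 / 9) ^ d / N := by
    rw [h_eq]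
    gcongr
    exact sub_le_self _ (by positivity)
  refine ⟨h_eq, (rpow_half_mul_sqrt_le_of_le_pow_div d ?_ ?_ ?_ h_le).trans_eq ?_⟩ <;> norm_num
end
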